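/- arXiv:2604.13377 — 4 statements merged into one kernel-verified Lean document; each statement's English description precedes it below -/
import Mathlib

section
/- Let X be a metric space, let m : [0,∞) → [0,∞) be a nondecreasing concave function, and let v : X → ℝ be a Borel measurable function satisfying |v(x) − v(y)| ≤ m(d(x,y)) for all x, y ∈ X. Let γ and γ' be Borel probability measures on X, let π be a coupling of γ and γ', and assume that v is integrable with respect to γ and to γ' and that (x,y) ↦ d(x,y) is integrable with respect to π. Then |∫ v dγ − ∫ v dγ'| ≤ m(∫_{X×X} d(x,y) dπ(x,y)). -/
open MeasureTheory

/-!
Put `D = ∫ d dπ`. The marginal conditions give `∫ v dγ - ∫ v dγ' = ∫ (v x - v y) dπ`, which is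
bounded by `∫ |v x - v y| dπ`. If `D > 0`, the concave function `m` has a supporting line
`m t ≤ m D + a (t - D)` at the interior point `D` (`exists_supporting_line`), and integrating
`|v x - v y| ≤ m D + a (d(x, y) - D)` gives the bound `m D`. If `D = 0`, then `d = 0` almost
everywhere, so the integrand is almost everywhere at most `m 0`.

Library versions of Jensen's inequality ask for `m` continuous on `[0, ∞)` and `m ∘ d` integrable;
`m` may jump at `0`, and the supporting line makes both requirements unnecessary.
-/

lemma exists_supporting_line {m : ℝ → ℝ} (hm : ConcaveOn ℝ (Set.Ici 0) m) {D : ℝ} (hD : 0 < D) :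
    ∃ a : ℝ, ∀ t, 0 ≤ t → m t ≤ m D + a * (t - D) := by
  -- The slope is the right derivative at `D`, as the supremum of the slopes to the right of `D`.
  let S : Set ℝ := (fun s => (m s - m D) / (s - D)) '' Set.Ioi D
  have key : ∀ t, 0 ≤ t → t < D → ∀ r ∈ S, r ≤ (m D - m t) / (D - t) := by
    rintro t ht htD _ ⟨s, hs, rfl⟩
    exact hm.slope_anti_adjacent ht (hD.le.trans (le_of_lt hs)) htD hs
  have hbdd : BddAbove S := ⟨_, key 0 le_rfl hD⟩
  have hne : S.Nonempty := ⟨_, D + 1, by simp, rfl⟩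
  refine ⟨sSup S, fun t ht => ?_⟩
  rcases lt_trichotomy t D with h | rfl | h
  · have h1 := csSup_le hne (key t ht h)
    rw [le_div_iff₀ (sub_pos.2 h)] at h1
    linarith
  · simp
  · have h1 := le_csSup hbdd ⟨t, h, rfl⟩
    rw [div_le_iff₀ (sub_pos.2 h)] at h1
    linarith

/-- modulus-of-continuity bound on the difference of expectations
via the transport cost of a coupling. -/
theorem stmt_0 {X : Type*} [MetricSpace X] [MeasurableSpace X] [BorelSpace X]
    (m : ℝ → ℝ) (hm_nonneg : ∀ t, 0 ≤ t → 0 ≤ m t)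
    (hm_mono : MonotoneOn m (Set.Ici 0))
    (hm_conc : ConcaveOn ℝ (Set.Ici 0) m)
    (v : X → ℝ) (hv_meas : Measurable v)
    (hv_mod : ∀ x y : X, |v x - v y| ≤ m (dist x y))
    (γ γ' : Measure X) [IsProbabilityMeasure γ] [IsProbabilityMeasure γ']
    (π : Measure (X × X)) [IsProbabilityMeasure π]
    (hπ1 : π.map Prod.fst = γ) (hπ2 : π.map Prod.snd = γ')
    (hint1 : Integrable v γ) (hint2 : Integrable v γ')
    (hdint : Integrable (fun p : X × X => dist p.1 p.2) π) :
    |(∫ x, v x ∂γ) - ∫ x, v x ∂γ'| ≤ m (∫ p : X × X, dist p.1 p.2 ∂π) := by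
  subst hπ1 hπ2
  have i1 : Integrable (fun p : X × X => v p.1) π := hint1.comp_measurable measurable_fst
  have i2 : Integrable (fun p : X × X => v p.2) π := hint2.comp_measurable measurable_snd
  rw [integral_map measurable_fst.aemeasurable hv_meas.aestronglyMeasurable,
    integral_map measurable_snd.aemeasurable hv_meas.aestronglyMeasurable, ← integral_sub i1 i2]
  refine abs_integral_le_integral_abs.trans ?_
  have hi : Integrable (fun p : X × X => |v p.1 - v p.2|) π := (i1.sub i2).abs
  have hnn : 0 ≤ fun p : X × X => dist p.1 p.2 := fun _ => dist_nonneg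
  rcases (integral_nonneg hnn : 0 ≤ ∫ p : X × X, dist p.1 p.2 ∂π).eq_or_lt' with h0 | hpos
  · rw [h0]
    have hae := (integral_eq_zero_iff_of_nonneg hnn hdint).1 h0
    calc ∫ p : X × X, |v p.1 - v p.2| ∂π ≤ ∫ _ : X × X, m 0 ∂π := by
          refine integral_mono_ae hi (integrable_const _) ?_
          filter_upwards [hae] with p hp
          have hp' : dist p.1 p.2 = 0 := hp
          simpa only [hp'] using hv_mod p.1 p.2
      _ = m 0 := by simp
  · obtain ⟨a, ha⟩ := exists_supporting_line hm_conc hpos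
    set D := ∫ p : X × X, dist p.1 p.2 ∂π with hDdef
    have hs : Integrable (fun p : X × X => a * (dist p.1 p.2 - D)) π :=
      (hdint.sub (integrable_const D)).const_mul a
    calc ∫ p : X × X, |v p.1 - v p.2| ∂π
        ≤ ∫ p : X × X, (m D + a * (dist p.1 p.2 - D)) ∂π :=
          integral_mono hi ((integrable_const _).add hs)
            fun p => (hv_mod p.1 p.2).trans (ha _ dist_nonneg)
      _ = m D := by
          rw [integral_add (integrable_const _) hs, integral_const_mul,
            integral_sub hdint (integrable_const D), ← hDdef]
          simp
end

section
/- Let X be a metric space, let C be a nonempty finite set, let p : C → ℝ be nonnegative weights with ∑_{c∈C} p(c) = 1, let D ≥ 0, and for each c ∈ C let q_c ⊆ X be a set with diam(q_c) ≤ D and let α_c and α'_c be Borel probability measures on X with α_c(q_c) = 1 and α'_c(q_c) = 1. Then there exists a coupling π of the mixtures γ := ∑_{c∈C} p(c)·α_c and γ' := ∑_{c∈C} p(c)·α'_c such that ∫_{X×X} d(x,y) dπ(x,y) ≤ D; in particular the Wasserstein distance between γ and γ' is at most D. -/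
/-!
Couple the two mixtures cluster by cluster: `π = ∑ c, p c • (α c ⊗ α' c)`. Its marginals are the two
mixtures, and `π`-almost surely both points lie in a common cluster, hence at distance at most `D`.

The clusters need not be measurable, so they are replaced by their closures, which are closed sets
of the same diameter. The space need not be second countable, so `edist` need not be measurable for
the product `σ`-algebra; only monotonicity of the lower integral is used.
-/

open MeasureTheory

/-- Independent points drawn from two distributions concentrated on a set of diameter at most `D`
are almost surely within distance `D`; the set itself may be non-measurable. -/
lemma ae_edist_le_of_diam_le {X : Type*} [MetricSpace X] [MeasurableSpace X] [BorelSpace X]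
    (μ ν : Measure X) [IsProbabilityMeasure μ] [IsProbabilityMeasure ν] (s : Set X) (D : ENNReal)
    (hs : Metric.ediam s ≤ D) (hμ : μ s = 1) (hν : ν s = 1) :
    ∀ᵐ r ∂(μ.prod ν), edist r.1 r.2 ≤ D := by
  have key : ∀ (ρ : Measure X) [IsProbabilityMeasure ρ], ρ s = 1 → ∀ᵐ x ∂ρ, x ∈ closure s := by
    intro ρ _ hρ
    refine (mem_ae_iff_prob_eq_one isClosed_closure.measurableSet).2 (le_antisymm prob_le_one ?_)
    exact hρ ▸ measure_mono subset_closure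
  have h1 : ∀ᵐ r ∂(μ.prod ν), r.1 ∈ closure s :=
    Measure.quasiMeasurePreserving_fst.ae (key μ hμ)
  have h2 : ∀ᵐ r ∂(μ.prod ν), r.2 ∈ closure s :=
    Measure.quasiMeasurePreserving_snd.ae (key ν hν)
  filter_upwards [h1, h2] with r hr1 hr2
  exact (Metric.edist_le_ediam_of_mem hr1 hr2).trans ((Metric.ediam_closure s).trans_le hs)

/-- any two mixtures, with the same weights, of conditional distributions
supported on common clusters of diameter at most `D` admit a coupling of transport
cost at most `D` (hence are within Wasserstein distance `D`). -/
theorem stmt_6 {X : Type*} [MetricSpace X] [MeasurableSpace X] [BorelSpace X]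
    {C : Type*} [Fintype C] [Nonempty C]
    (p : C → ℝ) (hp0 : ∀ c, 0 ≤ p c) (hp1 : ∑ c, p c = 1)
    (D : ℝ) (hD : 0 ≤ D)
    (q : C → Set X) (hq : ∀ c, EMetric.diam (q c) ≤ ENNReal.ofReal D)
    (α α' : C → Measure X) [∀ c, IsProbabilityMeasure (α c)]
    [∀ c, IsProbabilityMeasure (α' c)]
    (hα : ∀ c, α c (q c) = 1) (hα' : ∀ c, α' c (q c) = 1) :
    ∃ π : Measure (X × X), IsProbabilityMeasure π ∧
      π.map Prod.fst = ∑ c, ENNReal.ofReal (p c) • α c ∧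
      π.map Prod.snd = ∑ c, ENNReal.ofReal (p c) • α' c ∧
      ∫⁻ r : X × X, edist r.1 r.2 ∂π ≤ ENNReal.ofReal D := by
  have hsum : ∑ c, ENNReal.ofReal (p c) = 1 := by
    rw [← ENNReal.ofReal_sum_of_nonneg fun c _ => hp0 c, hp1, ENNReal.ofReal_one]
  let π : Measure (X × X) := ∑ c, ENNReal.ofReal (p c) • (α c).prod (α' c)
  have hπ : IsProbabilityMeasure π := ⟨by simp [π, hsum]⟩
  refine ⟨π, hπ, ?_, ?_, ?_⟩
  · ext s hs
    rw [Measure.map_apply measurable_fst hs]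
    simp [π, ← Set.prod_univ, Measure.prod_prod]
  · ext s hs
    rw [Measure.map_apply measurable_snd hs]
    simp [π, ← Set.univ_prod, Measure.prod_prod]
  · have hae : ∀ᵐ r ∂π, edist r.1 r.2 ≤ ENNReal.ofReal D := by
      rw [ae_iff]
      simp only [π, Measure.coe_finset_sum, Finset.sum_apply, Measure.smul_apply, smul_eq_mul]
      refine Finset.sum_eq_zero fun c _ => ?_
      rw [ae_iff.1 (ae_edist_le_of_diam_le (α c) (α' c) (q c) _ (hq c) (hα c) (hα' c)), mul_zero]
    calc ∫⁻ r : X × X, edist r.1 r.2 ∂π ≤ ∫⁻ _, ENNReal.ofReal D ∂π := lintegral_mono_ae hae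
      _ = ENNReal.ofReal D := by simp
end

section
/- Let X be a measurable space in which every singleton is measurable, let C be a nonempty finite set, let p : C → ℝ be nonnegative weights with ∑_{c∈C} p(c) = 1, for each c ∈ C let q_c ⊆ X be a nonempty finite set, and let v : X → ℝ be a measurable function. Then the infimum of ∫ v dγ over all measures γ of the form γ = ∑_{c∈C} p(c)·θ_c, where each θ_c is a probability measure on X with θ_c(q_c) = 1, equals ∑_{c∈C} p(c)·min_{s∈q_c} v(s). -/
/-!
The infimum is attained. A measure concentrated on the finite set `q c` makes `v` almost surely
bounded, hence integrable, so the integral against a mixture splits as `∑ c, p c * ∫ v ∂θ c`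
(`integral_mixture`). Each `∫ v ∂θ c` is at least the minimum of `v` on `q c`, with equality when
`θ c` is the Dirac mass at a minimizer.
-/

open MeasureTheory

theorem ae_mem_of_finset_measure_one {X : Type*} [MeasurableSpace X] [MeasurableSingletonClass X]
    (μ : Measure X) [IsProbabilityMeasure μ] (s : Finset X) (h : μ (s : Set X) = 1) :
    ∀ᵐ x ∂μ, x ∈ s :=
  (mem_ae_iff_prob_eq_one s.measurableSet).2 h

theorem integrable_of_finset_measure_one {X : Type*} [MeasurableSpace X]
    [MeasurableSingletonClass X] (μ : Measure X) [IsProbabilityMeasure μ] (s : Finset X)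
    (h : μ (s : Set X) = 1) (v : X → ℝ) (hv : Measurable v) : Integrable v μ := by
  refine Integrable.of_bound hv.aestronglyMeasurable (∑ x ∈ s, ‖v x‖) ?_
  filter_upwards [ae_mem_of_finset_measure_one μ s h] with x hx
  exact Finset.single_le_sum (f := fun x => ‖v x‖) (fun _ _ => norm_nonneg _) hx

theorem integral_mixture {X : Type*} [MeasurableSpace X] {C : Type*} [Fintype C]
    (p : C → ℝ) (hp0 : ∀ c, 0 ≤ p c) (θ : C → Measure X) (v : X → ℝ)
    (hint : ∀ c, Integrable v (θ c)) :
    ∫ x, v x ∂(∑ c, ENNReal.ofReal (p c) • θ c) = ∑ c, p c * ∫ x, v x ∂(θ c) := by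
  rw [integral_finsetSum_measure fun c _ => (hint c).smul_measure ENNReal.ofReal_ne_top]
  refine Finset.sum_congr rfl fun c _ => ?_
  rw [integral_smul_measure, ENNReal.toReal_ofReal (hp0 c), smul_eq_mul]

/-- the pessimistic robust Bellman backup over the ambiguity set of
fixed-weight mixtures of conditional distributions supported on finite clusters
equals the weighted sum of cluster-wise minima of the value function. -/
theorem stmt_13 {X : Type*} [MeasurableSpace X] [MeasurableSingletonClass X]
    {C : Type*} [Fintype C] [Nonempty C]
    (p : C → ℝ) (hp0 : ∀ c, 0 ≤ p c) (hp1 : ∑ c, p c = 1)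
    (q : C → Finset X) (hq : ∀ c, (q c).Nonempty)
    (v : X → ℝ) (hv : Measurable v) :
    sInf {r : ℝ | ∃ θ : C → Measure X, (∀ c, IsProbabilityMeasure (θ c)) ∧
        (∀ c, θ c (q c : Set X) = 1) ∧
        r = ∫ x, v x ∂(∑ c, ENNReal.ofReal (p c) • θ c)} =
      ∑ c, p c * (q c).inf' (hq c) v := by
  refine IsLeast.csInf_eq ⟨?_, ?_⟩
  · choose m hm hmin using fun c => Finset.exists_mem_eq_inf' (hq c) v
    have hθ : ∀ c, Measure.dirac (m c) (q c : Set X) = 1 := fun c =>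
      Measure.dirac_apply_of_mem (hm c)
    refine ⟨fun c => Measure.dirac (m c), fun c => inferInstance, hθ, ?_⟩
    rw [integral_mixture p hp0 _ v fun c =>
      integrable_of_finset_measure_one _ (q c) (hθ c) v hv]
    simp only [integral_dirac, hmin]
  · rintro r ⟨θ, hprob, hθ, rfl⟩
    have hint : ∀ c, Integrable v (θ c) := fun c =>
      integrable_of_finset_measure_one _ (q c) (hθ c) v hv
    rw [integral_mixture p hp0 θ v hint]
    refine Finset.sum_le_sum fun c _ => mul_le_mul_of_nonneg_left ?_ (hp0 c)
    calc (q c).inf' (hq c) v = ∫ _, (q c).inf' (hq c) v ∂(θ c) := by simp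
      _ ≤ ∫ x, v x ∂(θ c) := by
        refine integral_mono_ae (integrable_const _) (hint c) ?_
        filter_upwards [ae_mem_of_finset_measure_one (θ c) (q c) (hθ c)] with x hx
        exact Finset.inf'_le v hx
end

section
/- Let n ∈ ℕ, let W be a metric space equipped with a Borel probability measure P, let A be a nonempty finite set, let L ≥ 0 and τ̄ ≥ 0, and for each a ∈ A let f_a : ℝⁿ → W → ℝⁿ be such that for every x the map w ↦ f_a(x)(w) is Borel measurable and ‖f_a(x)(w) − f_a(y)(w)‖ ≤ L·‖x − y‖ for all x, y ∈ ℝⁿ and w ∈ W. For x ∈ ℝⁿ and a ∈ A let μ_{x,a} denote the pushforward of P under w ↦ f_a(x)(w), and assume μ_{x,a}(B) ≤ τ̄·volume(B) for every Borel set B ⊆ ℝⁿ and all x, a. Let R be a finite collection of pairwise disjoint Borel subsets of ℝⁿ whose union is ℝⁿ, such that for each r ∈ R the topological frontier of r is compact with volume zero. Let v : ℝⁿ → ℝ be Borel measurable with 0 ≤ v ≤ 1 such that v is uniformly continuous on each r ∈ R. Then the function x ↦ max_{a∈A} ∫ v dμ_{x,a} is uniformly continuous on ℝⁿ. -/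
/-!
Let `K` be the union of the frontiers of the regions, a compact Lebesgue-null set. Its closed
`ρ`-thickenings shrink to `K`, so their volume tends to `0`, and by the density bound each kernel
`μ_{x,a}` gives the `ρ`-thickening small mass, uniformly in `x` and `a`. Couple the kernels at `x`
and `y` through the common disturbance `w`: the two successors are at distance at most `L‖x - y‖`.
If the first one lies outside the `ρ`-thickening of `K` and this distance is less than `ρ`, the
segment joining them avoids every frontier, so they lie in the same region and `v` changes little.
Otherwise `v` changes by at most `1`, on an event of small probability. Hence each
`x ↦ ∫ v dμ_{x,a}` has a modulus of continuity independent of `a`, and so has the maximum.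
-/

open MeasureTheory

/-- A segment that starts in `r` and avoids the frontier of `r` stays in `r`. -/
lemma mem_of_segment_disjoint_frontier {E : Type*} [NormedAddCommGroup E] [NormedSpace ℝ E]
    {r : Set E} {p q : E} (hp : p ∈ r) (h : Disjoint (segment ℝ p q) (frontier r)) : q ∈ r := by
  by_contra hq
  have hpre : IsPreconnected (segment ℝ p q) := (convex_segment p q).isPreconnected
  have hsub : segment ℝ p q ⊆ interior r ∪ (closure r)ᶜ := by
    intro z hz
    by_cases hi : z ∈ interior r
    · exact Or.inl hi
    · exact Or.inr fun hc => Set.disjoint_left.1 h hz ⟨hc, hi⟩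
  obtain ⟨z, -, hz1, hz2⟩ := hpre _ _ isOpen_interior isClosed_closure.isOpen_compl hsub
    ⟨p, left_mem_segment ℝ p q, (hsub (left_mem_segment ℝ p q)).resolve_right
      fun hc => hc (subset_closure hp)⟩
    ⟨q, right_mem_segment ℝ p q, (hsub (right_mem_segment ℝ p q)).resolve_left
      fun hi => hq (interior_subset hi)⟩
  exact hz2 (subset_closure (interior_subset hz1))

/-- Finitely many reals that move by at most `ε` have maxima that move by at most `ε`. -/
lemma abs_ciSup_sub_ciSup_le {A : Type*} [Finite A] [Nonempty A] {F G : A → ℝ} {ε : ℝ}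
    (h : ∀ a, |F a - G a| ≤ ε) : |(⨆ a, F a) - ⨆ a, G a| ≤ ε := by
  have hF : BddAbove (Set.range F) := (Set.finite_range F).bddAbove
  have hG : BddAbove (Set.range G) := (Set.finite_range G).bddAbove
  have h1 : (⨆ a, F a) ≤ (⨆ a, G a) + ε := ciSup_le fun a => by
    linarith [le_ciSup hG a, (abs_le.1 (h a)).2]
  have h2 : (⨆ a, G a) ≤ (⨆ a, F a) + ε := ciSup_le fun a => by
    linarith [le_ciSup hF a, (abs_le.1 (h a)).1]
  exact abs_le.2 ⟨by linarith, by linarith⟩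

/-- Since there are finitely many regions, one `δ` serves the uniform continuity of `v` on each. -/
lemma exists_common_delta {E : Type*} [PseudoMetricSpace E] {v : E → ℝ} (R : Finset (Set E))
    (h : ∀ r ∈ R, UniformContinuousOn v r) {ε : ℝ} (hε : 0 < ε) :
    ∃ δ > 0, ∀ r ∈ R, ∀ p ∈ r, ∀ q ∈ r, dist p q < δ → dist (v p) (v q) < ε := by
  classical
  induction R using Finset.induction_on with
  | empty => exact ⟨1, one_pos, by simp⟩
  | insert s R _ ih =>
    obtain ⟨δ₁, hδ₁, h₁⟩ := ih fun r hr => h r (Finset.mem_insert_of_mem hr)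
    obtain ⟨δ₂, hδ₂, h₂⟩ :=
      Metric.uniformContinuousOn_iff.1 (h s (Finset.mem_insert_self s R)) ε hε
    refine ⟨min δ₁ δ₂, lt_min hδ₁ hδ₂, fun r hr p hp q hq hpq => ?_⟩
    rcases Finset.mem_insert.1 hr with rfl | hr
    · exact h₂ p hp q hq (hpq.trans_le (min_le_right _ _))
    · exact h₁ r hr p hp q hq (hpq.trans_le (min_le_left _ _))

/-- A compact null set has closed thickenings of arbitrarily small scaled volume. -/
lemma exists_cthickening_small {E : Type*} [MetricSpace E] [ProperSpace E] [MeasureSpace E]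
    [OpensMeasurableSpace E] [IsFiniteMeasureOnCompacts (volume : Measure E)] {K : Set E}
    (hK : IsCompact K) (hK0 : volume K = 0) (τ : ℝ) {ε : ℝ} (hε : 0 < ε) :
    ∃ ρ > 0, ENNReal.ofReal τ * volume (Metric.cthickening ρ K) < ENNReal.ofReal ε := by
  have h := tendsto_measure_cthickening_of_isCompact (μ := (volume : Measure E)) hK
  rw [hK0] at h
  have h' := ENNReal.Tendsto.const_mul (a := ENNReal.ofReal τ) h (Or.inr ENNReal.ofReal_ne_top)
  rw [mul_zero] at h'
  have h2 := (h'.mono_left (nhdsWithin_le_nhds (s := Set.Ioi 0))).eventually_lt_const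
    (u := ENNReal.ofReal ε) (ENNReal.ofReal_pos.2 hε)
  obtain ⟨ρ, h3, h4⟩ := (h2.and (self_mem_nhdsWithin)).exists
  exact ⟨ρ, h4, h3⟩

/-- induction step of the paper's Lemma 2: a one-step Bellman backup
`x ↦ max_{a ∈ A} ∫ v dμ_{x,a}` of a `[0,1]`-valued function `v` that is uniformly
continuous on each region of a finite partition of `ℝⁿ` with compact Lebesgue-null
boundaries is uniformly continuous, when the kernels `μ_{x,a}` are pushforwards of a
disturbance distribution under an `L`-Lipschitz-in-state vector field and have
density bounded by `τ̄` w.r.t. Lebesgue measure. -/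
theorem stmt_17 (n : ℕ) {W : Type*} [MetricSpace W] [MeasurableSpace W] [BorelSpace W]
    (P : Measure W) [IsProbabilityMeasure P]
    {A : Type*} [Fintype A] [Nonempty A]
    (L τ : ℝ) (hL : 0 ≤ L) (hτ : 0 ≤ τ)
    (f : A → EuclideanSpace ℝ (Fin n) → W → EuclideanSpace ℝ (Fin n))
    (hf_meas : ∀ a x, Measurable (f a x))
    (hf_lip : ∀ a, ∀ x y : EuclideanSpace ℝ (Fin n), ∀ w : W,
      ‖f a x w - f a y w‖ ≤ L * ‖x - y‖)
    (hdens : ∀ a x, ∀ B : Set (EuclideanSpace ℝ (Fin n)), MeasurableSet B →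
      (P.map (f a x)) B ≤ ENNReal.ofReal τ * volume B)
    (R : Finset (Set (EuclideanSpace ℝ (Fin n))))
    (hR_meas : ∀ r ∈ R, MeasurableSet r)
    (hR_disj : (R : Set (Set (EuclideanSpace ℝ (Fin n)))).PairwiseDisjoint id)
    (hR_cover : ⋃ r ∈ R, r = Set.univ)
    (hR_frontier : ∀ r ∈ R, IsCompact (frontier r) ∧ volume (frontier r) = 0)
    (v : EuclideanSpace ℝ (Fin n) → ℝ) (hv_meas : Measurable v)
    (hv0 : ∀ x, 0 ≤ v x) (hv1 : ∀ x, v x ≤ 1)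
    (hv_uc : ∀ r ∈ R, UniformContinuousOn v r) :
    UniformContinuous (fun x => ⨆ a : A, ∫ y, v y ∂(P.map (f a x))) := by
  classical
  set K : Set (EuclideanSpace ℝ (Fin n)) := ⋃ r ∈ R, frontier r with hKdef
  have hK : IsCompact K := R.isCompact_biUnion fun r hr => (hR_frontier r hr).1
  have hK0 : volume K = 0 :=
    (measure_biUnion_null_iff R.countable_toSet).2 fun r hr => (hR_frontier r hr).2
  rw [Metric.uniformContinuous_iff]
  intro ε hε
  obtain ⟨δ, hδ, hvδ⟩ := exists_common_delta R hv_uc (show 0 < ε / 3 by positivity)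
  obtain ⟨ρ, hρ, hsmall⟩ := exists_cthickening_small hK hK0 τ (show 0 < ε / 3 by positivity)
  set T := Metric.cthickening ρ K with hT
  have hTm : MeasurableSet T := Metric.isClosed_cthickening.measurableSet
  have hη : 0 < min δ ρ := lt_min hδ hρ
  -- `L + 1` instead of `L` avoids dividing by zero.
  refine ⟨min δ ρ / (L + 1), by positivity, fun {x y} hxy => ?_⟩
  have hLxy : L * ‖x - y‖ < min δ ρ := by
    rw [dist_eq_norm, lt_div_iff₀ (by positivity)] at hxy
    nlinarith [norm_nonneg (x - y)]
  have hpt : ∀ p q, dist p q < min δ ρ →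
      |v p - v q| ≤ ε / 3 + T.indicator (fun _ => (1 : ℝ)) p := by
    intro p q hpq
    by_cases hp : p ∈ T
    · rw [Set.indicator_of_mem hp]
      exact abs_le.2 ⟨by linarith [hv0 p, hv1 q], by linarith [hv1 p, hv0 q]⟩
    · rw [Set.indicator_of_notMem hp, add_zero]
      obtain ⟨r, hr, hpr⟩ : ∃ r ∈ R, p ∈ r := by
        have hpU : p ∈ ⋃ r ∈ R, r := hR_cover ▸ Set.mem_univ p
        simpa using hpU
      have hqr : q ∈ r := by
        refine mem_of_segment_disjoint_frontier hpr (Set.disjoint_left.2 fun z hz hzr => hp ?_)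
        have hzK : z ∈ K := Set.mem_biUnion (show r ∈ (R : Set _) from hr) hzr
        refine Metric.mem_cthickening_of_dist_le p z ρ K hzK ?_
        have hzb : z ∈ Metric.closedBall p (dist p q) :=
          (convex_closedBall p _).segment_subset (Metric.mem_closedBall_self dist_nonneg)
            (by simp [dist_comm]) hz
        rw [dist_comm]
        exact (Metric.mem_closedBall.1 hzb).trans (hpq.le.trans (min_le_right _ _))
      exact (hvδ r hr p hpr q hqr (hpq.trans_le (min_le_left _ _))).le
  have hint : ∀ a z, Integrable (fun w => v (f a z w)) P := fun a z =>
    Integrable.of_bound (hv_meas.comp (hf_meas a z)).aestronglyMeasurable 1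
      (Filter.Eventually.of_forall fun w => by
        rw [Real.norm_eq_abs, abs_of_nonneg (hv0 _)]; exact hv1 _)
  rw [Real.dist_eq]
  refine lt_of_le_of_lt (abs_ciSup_sub_ciSup_le (ε := ε / 3 + ε / 3) fun a => ?_) (by linarith)
  rw [integral_map (hf_meas a x).aemeasurable hv_meas.aestronglyMeasurable,
    integral_map (hf_meas a y).aemeasurable hv_meas.aestronglyMeasurable,
    ← integral_sub (hint a x) (hint a y)]
  have hTm' : MeasurableSet (f a x ⁻¹' T) := hf_meas a x hTm
  have hind : Integrable ((f a x ⁻¹' T).indicator fun _ => (1 : ℝ)) P :=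
    (integrable_const (1 : ℝ)).indicator hTm'
  have hPT : P.real (f a x ⁻¹' T) ≤ ε / 3 := by
    refine ENNReal.toReal_le_of_le_ofReal (by positivity) ?_
    rw [← Measure.map_apply (hf_meas a x) hTm]
    exact (hdens a x T hTm).trans hsmall.le
  calc |∫ w, (v (f a x w) - v (f a y w)) ∂P|
      ≤ ∫ w, |v (f a x w) - v (f a y w)| ∂P := abs_integral_le_integral_abs
    _ ≤ ∫ w, (ε / 3 + (f a x ⁻¹' T).indicator (fun _ => (1 : ℝ)) w) ∂P :=
        integral_mono ((hint a x).sub (hint a y)).abs ((integrable_const _).add hind) fun w =>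
          hpt _ _ (by rw [dist_eq_norm]; exact (hf_lip a x y w).trans_lt hLxy)
    _ = ε / 3 + P.real (f a x ⁻¹' T) := by
        rw [integral_add (integrable_const _) hind, integral_indicator_const _ hTm']
        simp
    _ ≤ ε / 3 + ε / 3 := by linarith
end
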